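/- Let 𝕏 be a σ-finite measure space and ℳ, 𝒩, 𝒬 Banach L^0(𝕏)-modules. For every b ∈ B(ℳ,𝒩;𝒬) there exists a unique b̃_π ∈ Hom(ℳ ⊗̂_π 𝒩; 𝒬) such that b̃_π(v ⊗ w) = b(v,w) for all v ∈ ℳ and w ∈ 𝒩; moreover, the map b ↦ b̃_π is an isomorphism of Banach L^0(𝕏)-modules from B(ℳ,𝒩;𝒬) onto Hom(ℳ ⊗̂_π 𝒩; 𝒬). In particular, taking 𝒬 = L^0(𝕏), the dual (ℳ ⊗̂_π 𝒩)* is isomorphic as a Banach L^0(𝕏)-module to B(ℳ,𝒩). -/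

import Mathlib

/-!
Let `b` be a bilinear map with bound `g`, and `T` its linearisation on the algebraic tensor
product. Every representation `α = ∑ vᵢ ⊗ wᵢ` gives `|T α| ≤ g ∑ |vᵢ||wᵢ|`; as multiplication by
`g ≥ 0` commutes with infima in `L⁰` (`le_mul_of_isGLB`), this yields `|T α| ≤ g |α|_π`
(`pn_lift_le`). A map with such a bound extends to the completion with the same bound
(`exists_ext`): for `e αₙ → p` the sequence `T αₙ` is Cauchy, and its limit `q` is determined by
the estimates `|T α - q| ≤ g |e α - p|` for all `α`. Uniqueness follows from density of pure
tensor sums (`IsHom.ext_of_tmul`), and conversely a bound of `B` restricts to a bound of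
`(v, w) ↦ B (v ⊗ w)` since `|v ⊗ w|_π ≤ |v||w|`. Hence both sides have the same admissible bounds.

All limits are taken in the distance of `L⁰`, which is handled through a.e. convergence: a
sequence with summable distances to `0` is a.e. absolutely summable
(`ae_summable_of_summable_dL0`), so convergence to `0` in the distance gives an a.e. convergent
subsequence. The same fact shows that `L⁰` is complete, i.e. a Banach module over itself, and the
statement on the dual module is the general one with target `L⁰`.
-/

open MeasureTheory Filter Set TensorProduct

noncomputable section

namespace Paper

variable {X : Type*} [MeasurableSpace X]

/-- The space `L⁰(𝕏)` of real-valued measurable functions up to `μ`-a.e. equality. -/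
abbrev L0 (μ : Measure X) : Type _ := X →ₘ[μ] ℝ

instance (μ : Measure X) : CommRing (L0 μ) :=
  { (inferInstance : AddCommGroup (L0 μ)), (inferInstance : CommMonoid (L0 μ)) with
    left_distrib := fun a b c => AEEqFun.toGerm_injective <| by
      simp only [AEEqFun.mul_toGerm, AEEqFun.add_toGerm, mul_add]
    right_distrib := fun a b c => AEEqFun.toGerm_injective <| by
      simp only [AEEqFun.mul_toGerm, AEEqFun.add_toGerm, add_mul]
    zero_mul := fun a => AEEqFun.toGerm_injective <| by
      simp only [AEEqFun.mul_toGerm, AEEqFun.zero_toGerm, zero_mul]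
    mul_zero := fun a => AEEqFun.toGerm_injective <| by
      simp only [AEEqFun.mul_toGerm, AEEqFun.zero_toGerm, mul_zero] }

/-- The distance on `L⁰(𝕏)` inducing the topology of convergence in measure, defined through
the auxiliary finite measure `μ.toFinite` (which satisfies `μ ≪ μ.toFinite ≪ μ`). -/
noncomputable def dL0 (μ : Measure X) [SFinite μ] (f g : L0 μ) : ℝ :=
  ∫ x, min |f x - g x| 1 ∂(μ.toFinite)

/-- A Banach `L⁰(𝕏)`-module: a module over `L⁰(𝕏)` endowed with a pointwise norm, complete
with respect to the induced distance. -/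
class BanachMod (μ : Measure X) [SFinite μ] (M : Type*) [AddCommGroup M]
    [Module (L0 μ) M] where
  pn : M → L0 μ
  pn_nonneg : ∀ v : M, 0 ≤ pn v
  pn_eq_zero : ∀ v : M, pn v = 0 ↔ v = 0
  pn_add_le : ∀ v w : M, pn (v + w) ≤ pn v + pn w
  pn_smul : ∀ (f : L0 μ) (v : M), pn (f • v) = |f| * pn v
  complete : ∀ u : ℕ → M,
    (∀ ε : ℝ, 0 < ε → ∃ N : ℕ, ∀ m ≥ N, ∀ n ≥ N, dL0 μ (pn (u m - u n)) 0 < ε) →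
    ∃ v : M, Tendsto (fun n => dL0 μ (pn (u n - v)) 0) atTop (nhds 0)

/-- The pointwise norm of a Banach `L⁰(𝕏)`-module, with the measure explicit. -/
noncomputable def pn (μ : Measure X) [SFinite μ] {M : Type*} [AddCommGroup M]
    [Module (L0 μ) M] [BanachMod μ M] (v : M) : L0 μ :=
  BanachMod.pn v

/-- The distance on a Banach `L⁰(𝕏)`-module. -/
noncomputable def dM (μ : Measure X) [SFinite μ] {M : Type*} [AddCommGroup M]
    [Module (L0 μ) M] [BanachMod μ M] (v w : M) : ℝ :=
  dL0 μ (pn μ (v - w)) 0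

section Defs

variable (μ : Measure X) [SFinite μ]
variable {M N : Type*} [AddCommGroup M] [Module (L0 μ) M] [BanachMod μ M]
  [AddCommGroup N] [Module (L0 μ) N] [BanachMod μ N]

/-- The set of admissible bounds of a map between Banach `L⁰(𝕏)`-modules; the pointwise norm
`|T|` of a homomorphism is the infimum of this set. -/
def homBddSet (T : M → N) : Set (L0 μ) :=
  {g | 0 ≤ g ∧ ∀ v, pn μ (T v) ≤ g * pn μ v}

/-- A homomorphism of Banach `L⁰(𝕏)`-modules: an `L⁰(𝕏)`-linear map admitting a bound
`g ∈ L⁰(𝕏)⁺` with `|T v| ≤ g |v|` (equivalently, `L⁰(𝕏)`-linear and continuous). -/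
def IsHom (T : M →ₗ[L0 μ] N) : Prop :=
  ∃ g, g ∈ homBddSet μ (⇑T)

/-- The set of admissible bounds of an `L⁰(𝕏)`-valued map (for elements of the dual module). -/
def dualBddSet (ω : M → L0 μ) : Set (L0 μ) :=
  {g | 0 ≤ g ∧ ∀ v, |ω v| ≤ g * pn μ v}

/-- Membership in the dual module `ℳ*`: an `L⁰(𝕏)`-linear map `ω : ℳ → L⁰(𝕏)` admitting a
bound `g ∈ L⁰(𝕏)⁺` with `|ω v| ≤ g |v|`. -/
def IsDual (ω : M →ₗ[L0 μ] L0 μ) : Prop :=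
  ∃ g, g ∈ dualBddSet μ (⇑ω)

/-- Membership in the unit disc `𝔻_{ℳ*}` of the dual module: `|ω| ≤ 1`, equivalently
`|ω v| ≤ |v|` for every `v`. -/
def InDualDisc (ω : M →ₗ[L0 μ] L0 μ) : Prop :=
  ∀ v, |ω v| ≤ pn μ v

/-- The family of pointwise norms `|s - ∑_{i ∈ F ∪ G} v i|` for `G` finite disjoint from `F`,
whose `F`-indexed inf-sup being `0` defines `s = ∑_{i∈I} v i`. -/
def sumUB {I : Type*} (v : I → M) (s : M) (F : Finset I) : Set (L0 μ) :=
  {g | ∃ G : Finset I, Disjoint G F ∧ g = pn μ (s - (∑ i ∈ F, v i + ∑ i ∈ G, v i))}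

/-- `HasSumMod μ v s` means that the family `{v_i}` is summable in the Banach `L⁰(𝕏)`-module
with sum `s`, i.e. `⋀_F ⋁_G |s - ∑_{i ∈ F ∪ G} v_i| = 0` (the inner suprema being the values
of `b`, and the outer infimum being `0`). -/
def HasSumMod {I : Type*} (v : I → M) (s : M) : Prop :=
  ∃ b : Finset I → L0 μ, (∀ F, IsLUB (sumUB μ v s F) (b F)) ∧ IsGLB (Set.range b) 0

/-- A family in a Banach `L⁰(𝕏)`-module is summable if it has a sum. -/
def SummableMod {I : Type*} (v : I → M) : Prop :=
  ∃ s, HasSumMod μ v s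

/-- The partial sums `∑_{i ∈ F} |v i|` of the pointwise norms of a family; the element `|v|₁`
of `ℓ₁(I, ℳ)` is the supremum of this set. -/
def l1PartialSums {I : Type*} (v : I → M) : Set (L0 μ) :=
  {g | ∃ F : Finset I, g = ∑ i ∈ F, pn μ (v i)}

/-- Membership in `ℓ₁(I, ℳ)`: the partial sums of the pointwise norms admit a supremum
(equivalently, an upper bound) in `L⁰(𝕏)`. -/
def Meml1 {I : Type*} (v : I → M) : Prop :=
  ∃ b, IsLUB (l1PartialSums μ v) b

/-- The partial sums `∑_{i ∈ F} |v i|` for an `L⁰(𝕏)`-valued family. -/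
def l1PartialSumsF {I : Type*} (v : I → L0 μ) : Set (L0 μ) :=
  {g | ∃ F : Finset I, g = ∑ i ∈ F, |v i|}

/-- Membership in `ℓ₁(I, L⁰(𝕏))`. -/
def Meml1F {I : Type*} (v : I → L0 μ) : Prop :=
  ∃ b, IsLUB (l1PartialSumsF μ v) b

/-- The set whose infimum defines the projective pointwise norm: all values
`∑_{i=1}^n |v_i||w_i|` over representations `α = ∑_{i=1}^n v_i ⊗ w_i`. -/
def piReps (α : M ⊗[L0 μ] N) : Set (L0 μ) :=
  {g | ∃ (n : ℕ) (v : Fin n → M) (w : Fin n → N),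
    α = ∑ i, v i ⊗ₜ[L0 μ] w i ∧ g = ∑ i, pn μ (v i) * pn μ (w i)}

/-- The set whose supremum defines the injective pointwise norm: all values
`|∑_{i=1}^n ω(v_i) η(w_i)|` over representations `α = ∑_{i=1}^n v_i ⊗ w_i` and elements
`ω ∈ 𝔻_{ℳ*}`, `η ∈ 𝔻_{𝒩*}`. -/
def epsReps (α : M ⊗[L0 μ] N) : Set (L0 μ) :=
  {g | ∃ (n : ℕ) (v : Fin n → M) (w : Fin n → N)
    (ω : M →ₗ[L0 μ] L0 μ) (η : N →ₗ[L0 μ] L0 μ), InDualDisc μ ω ∧ InDualDisc μ η ∧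
    α = ∑ i, v i ⊗ₜ[L0 μ] w i ∧ g = |∑ i, ω (v i) * η (w i)|}

/-- `IsPiTensor μ M N P e` states that the Banach `L⁰(𝕏)`-module `P`, together with the
`L⁰(𝕏)`-linear map `e` defined on the algebraic tensor product, realizes the projective
tensor product `ℳ ⊗̂_π 𝒩`: the pointwise norm of `e α` is the projective pointwise norm
`|α|_π` and the image of `e` is dense. -/
structure IsPiTensor (M N P : Type*) [AddCommGroup M] [Module (L0 μ) M] [BanachMod μ M]
    [AddCommGroup N] [Module (L0 μ) N] [BanachMod μ N]
    [AddCommGroup P] [Module (L0 μ) P] [BanachMod μ P]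
    (e : M ⊗[L0 μ] N →ₗ[L0 μ] P) : Prop where
  pn_emb : ∀ α : M ⊗[L0 μ] N, IsGLB (piReps μ α) (pn μ (e α))
  dense : ∀ p : P, ∀ ε : ℝ, 0 < ε → ∃ α : M ⊗[L0 μ] N, dM μ (e α) p < ε

/-- `IsEpsTensor μ M N P e` states that the Banach `L⁰(𝕏)`-module `P`, together with the
`L⁰(𝕏)`-linear map `e` defined on the algebraic tensor product, realizes the injective
tensor product `ℳ ⊗̂_ε 𝒩`: the pointwise norm of `e α` is the injective pointwise norm
`|α|_ε` and the image of `e` is dense. -/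
structure IsEpsTensor (M N P : Type*) [AddCommGroup M] [Module (L0 μ) M] [BanachMod μ M]
    [AddCommGroup N] [Module (L0 μ) N] [BanachMod μ N]
    [AddCommGroup P] [Module (L0 μ) P] [BanachMod μ P]
    (e : M ⊗[L0 μ] N →ₗ[L0 μ] P) : Prop where
  pn_emb : ∀ α : M ⊗[L0 μ] N, IsLUB (epsReps μ α) (pn μ (e α))
  dense : ∀ p : P, ∀ ε : ℝ, 0 < ε → ∃ α : M ⊗[L0 μ] N, dM μ (e α) p < ε

end Defs

/-- The set of admissible bounds of a bilinear map `b : ℳ × 𝒩 → 𝒬`; the pointwise norm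
`|b|` is its infimum. -/
def bilinBddSet (μ : Measure X) [SFinite μ] {M N Q : Type*} [AddCommGroup M] [Module (L0 μ) M]
    [BanachMod μ M] [AddCommGroup N] [Module (L0 μ) N] [BanachMod μ N] [AddCommGroup Q]
    [Module (L0 μ) Q] [BanachMod μ Q] (b : M →ₗ[L0 μ] N →ₗ[L0 μ] Q) : Set (L0 μ) :=
  {g | 0 ≤ g ∧ ∀ (v : M) (w : N), pn μ (b v w) ≤ g * pn μ v * pn μ w}

/-- Membership in `B(ℳ,𝒩;𝒬)`: an `L⁰(𝕏)`-bilinear continuous map, i.e. one admitting a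
bound `g ∈ L⁰(𝕏)⁺` with `|b(v,w)| ≤ g |v||w|`. -/
def IsBddBilin (μ : Measure X) [SFinite μ] {M N Q : Type*} [AddCommGroup M] [Module (L0 μ) M]
    [BanachMod μ M] [AddCommGroup N] [Module (L0 μ) N] [BanachMod μ N] [AddCommGroup Q]
    [Module (L0 μ) Q] [BanachMod μ Q] (b : M →ₗ[L0 μ] N →ₗ[L0 μ] Q) : Prop :=
  ∃ g, g ∈ bilinBddSet μ b

/-- The set of admissible bounds of an `L⁰(𝕏)`-valued bilinear map. -/
def bilinBddSetF (μ : Measure X) [SFinite μ] {M N : Type*} [AddCommGroup M] [Module (L0 μ) M]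
    [BanachMod μ M] [AddCommGroup N] [Module (L0 μ) N] [BanachMod μ N]
    (b : M →ₗ[L0 μ] N →ₗ[L0 μ] L0 μ) : Set (L0 μ) :=
  {g | 0 ≤ g ∧ ∀ (v : M) (w : N), |b v w| ≤ g * pn μ v * pn μ w}

/-- Membership in `B(ℳ,𝒩) = B(ℳ,𝒩;L⁰(𝕏))`. -/
def IsBddBilinF (μ : Measure X) [SFinite μ] {M N : Type*} [AddCommGroup M] [Module (L0 μ) M]
    [BanachMod μ M] [AddCommGroup N] [Module (L0 μ) N] [BanachMod μ N]
    (b : M →ₗ[L0 μ] N →ₗ[L0 μ] L0 μ) : Prop :=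
  ∃ g, g ∈ bilinBddSetF μ b

/-! ### Pointwise calculus in `L⁰` -/

/-- `L⁰(𝕏)` is an ordered ring for the a.e. order. -/
instance instIsOrderedRingL0 (μ : Measure X) : IsOrderedRing (L0 μ) where
  add_le_add_left a b h c := by
    rw [← AEEqFun.coeFn_le] at h ⊢
    filter_upwards [h, AEEqFun.coeFn_add a c, AEEqFun.coeFn_add b c] with x h h1 h2
    simp only [h1, h2, Pi.add_apply]
    linarith
  zero_le_one := by
    rw [← AEEqFun.coeFn_le]
    filter_upwards [AEEqFun.coeFn_zero (μ := μ) (β := ℝ), AEEqFun.coeFn_one (μ := μ) (β := ℝ)]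
      with x h1 h2
    simp [h1, h2]
  mul_le_mul_of_nonneg_left a ha b c h := by
    rw [← AEEqFun.coeFn_le] at h ha ⊢
    filter_upwards [h, ha, AEEqFun.coeFn_zero (μ := μ) (β := ℝ), AEEqFun.coeFn_mul a b,
      AEEqFun.coeFn_mul a c] with x h ha h0 h1 h2
    simp only [h1, h2, Pi.mul_apply]
    rw [h0] at ha
    exact mul_le_mul_of_nonneg_left h ha
  mul_le_mul_of_nonneg_right a ha b c h := by
    rw [← AEEqFun.coeFn_le] at h ha ⊢
    filter_upwards [h, ha, AEEqFun.coeFn_zero (μ := μ) (β := ℝ), AEEqFun.coeFn_mul b a,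
      AEEqFun.coeFn_mul c a] with x h ha h0 h1 h2
    simp only [h1, h2, Pi.mul_apply]
    rw [h0] at ha
    exact mul_le_mul_of_nonneg_right h ha

theorem abs_mul_L0 (μ : Measure X) (f g : L0 μ) : |f * g| = |f| * |g| := by
  apply AEEqFun.ext
  filter_upwards [AEEqFun.coeFn_abs (f * g), AEEqFun.coeFn_mul f g, AEEqFun.coeFn_abs f,
    AEEqFun.coeFn_abs g, AEEqFun.coeFn_mul |f| |g|] with x h1 h2 h3 h4 h5
  simp [h1, h2, h3, h4, h5, abs_mul]

/-- Multiplication by a nonnegative element of `L⁰` commutes with infima of nonempty sets. The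
lower bound used is `c / g` where `g ≠ 0` and the infimum `a` itself where `g = 0`. -/
theorem le_mul_of_isGLB (μ : Measure X) {S : Set (L0 μ)} {a g c : L0 μ} (hS : S.Nonempty)
    (ha : IsGLB S a) (hg : 0 ≤ g) (hc : ∀ s ∈ S, c ≤ g * s) : c ≤ g * a := by
  set r : L0 μ := AEEqFun.compMeasurable (fun t : ℝ => t⁻¹) measurable_inv g with hr
  have hrx : ∀ᵐ x ∂μ, r x = (g x)⁻¹ := AEEqFun.coeFn_compMeasurable _ measurable_inv g
  set h : L0 μ := r * c + (1 - g * r) * a with hh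
  have hhx : ∀ᵐ x ∂μ, h x = (g x)⁻¹ * c x + (1 - g x * (g x)⁻¹) * a x := by
    filter_upwards [hrx, AEEqFun.coeFn_add (r * c) ((1 - g * r) * a), AEEqFun.coeFn_mul r c,
      AEEqFun.coeFn_mul (1 - g * r) a, AEEqFun.coeFn_sub 1 (g * r), AEEqFun.coeFn_mul g r,
      AEEqFun.coeFn_one (μ := μ) (β := ℝ)] with x h0 h1 h2 h3 h4 h5 h6
    rw [hh, h1]
    simp only [Pi.add_apply, h2, h3, Pi.mul_apply, h4, Pi.sub_apply, h5, h6, h0, Pi.one_apply]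
  have hgx : ∀ᵐ x ∂μ, 0 ≤ g x := by
    rw [← AEEqFun.coeFn_le] at hg
    filter_upwards [hg, AEEqFun.coeFn_zero (μ := μ) (β := ℝ)] with x h1 h2
    rwa [h2] at h1
  have hle : h ≤ a := by
    refine ha.2 fun s hs => ?_
    have h1 := AEEqFun.coeFn_le.2 (hc s hs)
    have h2 := AEEqFun.coeFn_le.2 (ha.1 hs)
    rw [← AEEqFun.coeFn_le]
    filter_upwards [h1, h2, hhx, hgx, AEEqFun.coeFn_mul g s] with x h1 h2 h3 h4 h5
    rw [h3]
    rw [h5, Pi.mul_apply] at h1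
    rcases h4.eq_or_lt with h0 | h0
    · simpa [← h0] using h2
    · rw [mul_inv_cancel₀ h0.ne', sub_self, zero_mul, add_zero, inv_mul_le_iff₀ h0]
      exact h1
  obtain ⟨s, hs⟩ := hS
  have h1 := AEEqFun.coeFn_le.2 (hc s hs)
  have h2 := AEEqFun.coeFn_le.2 hle
  rw [← AEEqFun.coeFn_le]
  filter_upwards [h1, h2, hhx, hgx, AEEqFun.coeFn_mul g s, AEEqFun.coeFn_mul g a]
    with x h1 h2 h3 h4 h5 h6
  rw [h6, Pi.mul_apply]
  rw [h3] at h2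
  rw [h5, Pi.mul_apply] at h1
  rcases h4.eq_or_lt with h0 | h0
  · simpa [← h0] using h1
  · rwa [mul_inv_cancel₀ h0.ne', sub_self, zero_mul, add_zero, inv_mul_le_iff₀ h0] at h2

/-! ### The distance of `L⁰` and a.e. convergence -/

theorem dL0_zero_eq (μ : Measure X) [SFinite μ] (f : L0 μ) :
    dL0 μ f 0 = ∫ x, min |f x| 1 ∂μ.toFinite := by
  refine integral_congr_ae ?_
  filter_upwards [(toFinite_absolutelyContinuous μ).ae_le
    (AEEqFun.coeFn_zero (μ := μ) (β := ℝ))] with x hx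
  simp [hx]

theorem integrable_min_one (μ : Measure X) [SFinite μ] (f : L0 μ) :
    Integrable (fun x => min |f x| 1) μ.toFinite := by
  refine Integrable.of_bound (C := 1) ?_ ?_
  · exact ((continuous_abs.min continuous_const).comp_stronglyMeasurable
      f.stronglyMeasurable).aestronglyMeasurable
  · refine Eventually.of_forall fun x => ?_
    rw [Real.norm_of_nonneg (by positivity)]
    exact min_le_right _ _

theorem dL0_nonneg (μ : Measure X) [SFinite μ] (f : L0 μ) : 0 ≤ dL0 μ f 0 := by
  rw [dL0_zero_eq]
  exact integral_nonneg fun x => by positivity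

theorem dL0_mono (μ : Measure X) [SFinite μ] {f g : L0 μ} (hf : 0 ≤ f) (h : f ≤ g) :
    dL0 μ f 0 ≤ dL0 μ g 0 := by
  rw [dL0_zero_eq, dL0_zero_eq]
  refine integral_mono_ae (integrable_min_one μ f) (integrable_min_one μ g) ?_
  have hac := (toFinite_absolutelyContinuous μ).ae_le
  filter_upwards [hac (AEEqFun.coeFn_zero (μ := μ) (β := ℝ)), hac (AEEqFun.coeFn_le.2 hf),
    hac (AEEqFun.coeFn_le.2 h)] with x h0 h1 h2
  rw [h0, Pi.zero_apply] at h1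
  exact min_le_min_right _ (abs_le_abs_of_nonneg h1 h2)

theorem dL0_add_le (μ : Measure X) [SFinite μ] (f g : L0 μ) :
    dL0 μ (f + g) 0 ≤ dL0 μ f 0 + dL0 μ g 0 := by
  rw [dL0_zero_eq, dL0_zero_eq, dL0_zero_eq,
    ← integral_add (integrable_min_one μ f) (integrable_min_one μ g)]
  refine integral_mono_ae (integrable_min_one μ _)
    ((integrable_min_one μ f).add (integrable_min_one μ g)) ?_
  filter_upwards [(toFinite_absolutelyContinuous μ).ae_le (AEEqFun.coeFn_add f g)] with x h
  rw [h]
  simp only [Pi.add_apply]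
  have h1 := abs_add_le (f x) (g x)
  have h2 := abs_nonneg (f x)
  have h3 := abs_nonneg (g x)
  rcases min_cases |f x| 1 with h | h <;> rcases min_cases |g x| 1 with h' | h' <;>
    rcases min_cases |f x + g x| 1 with h'' | h'' <;> linarith

theorem dL0_abs (μ : Measure X) [SFinite μ] (f : L0 μ) : dL0 μ |f| 0 = dL0 μ f 0 := by
  rw [dL0_zero_eq, dL0_zero_eq]
  refine integral_congr_ae ?_
  filter_upwards [(toFinite_absolutelyContinuous μ).ae_le (AEEqFun.coeFn_abs f)] with x h
  rw [h, abs_abs]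

theorem tendsto_dL0_of_ae (μ : Measure X) [SFinite μ] {f : ℕ → L0 μ}
    (h : ∀ᵐ x ∂μ, Tendsto (fun n => f n x) atTop (nhds 0)) :
    Tendsto (fun n => dL0 μ (f n) 0) atTop (nhds 0) := by
  simp_rw [dL0_zero_eq]
  have := tendsto_integral_of_dominated_convergence (μ := μ.toFinite)
    (F := fun n x => min |f n x| 1) (f := fun _ => (0 : ℝ)) (fun _ => (1 : ℝ))
    (fun n => (integrable_min_one μ (f n)).aestronglyMeasurable) (integrable_const _)
    (fun n => Eventually.of_forall fun x => by
      rw [Real.norm_of_nonneg (by positivity)]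
      exact min_le_right _ _) ?_
  · simpa using this
  · filter_upwards [(toFinite_absolutelyContinuous μ).ae_le h] with x hx
    have := (hx.abs).min (tendsto_const_nhds (x := (1 : ℝ)))
    simpa using this

/-- If the distances to `0` are summable, then the series of absolute values converges a.e.:
by monotone convergence `∑ min(|f k|, 1)` is integrable, and its finiteness at a point forces
`min(|f k|, 1) = |f k|` for all large `k`. -/
theorem ae_summable_of_summable_dL0 (μ : Measure X) [SFinite μ] {f : ℕ → L0 μ}
    (h : Summable fun k => dL0 μ (f k) 0) : ∀ᵐ x ∂μ, Summable fun k => |f k x| := by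
  refine (absolutelyContinuous_toFinite μ).ae_le ?_
  have hint : ∑' k, ∫⁻ x, ENNReal.ofReal (min |f k x| 1) ∂μ.toFinite ≠ ⊤ := by
    have : ∀ k, ∫⁻ x, ENNReal.ofReal (min |f k x| 1) ∂μ.toFinite
        = ENNReal.ofReal (dL0 μ (f k) 0) := fun k => by
      rw [dL0_zero_eq, ofReal_integral_eq_lintegral_ofReal (integrable_min_one μ (f k))]
      exact Eventually.of_forall fun x => by positivity
    simp_rw [this]
    exact h.tsum_ofReal_ne_top
  have hmeas : ∀ k, AEMeasurable (fun x => ENNReal.ofReal (min |f k x| 1)) μ.toFinite :=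
    fun k => (integrable_min_one μ (f k)).aemeasurable.ennreal_ofReal
  rw [← lintegral_tsum hmeas] at hint
  filter_upwards [ae_lt_top' (AEMeasurable.tsum hmeas) hint] with x hx
  have hs : Summable fun k => min |f k x| 1 := by
    have := ENNReal.summable_toReal hx.ne
    refine this.congr fun k => ?_
    rw [ENNReal.toReal_ofReal (by positivity)]
  have hev : ∀ᶠ k in atTop, min |f k x| 1 < 1 :=
    hs.tendsto_atTop_zero.eventually_lt_const one_pos
  refine (summable_congr_atTop ?_).1 hs
  filter_upwards [hev] with k hk
  rcases min_lt_iff.1 hk with h | h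
  · exact min_eq_left h.le
  · exact absurd h (lt_irrefl _)

theorem exists_subseq_ae (μ : Measure X) [SFinite μ] {f : ℕ → L0 μ}
    (h : Tendsto (fun n => dL0 μ (f n) 0) atTop (nhds 0)) :
    ∃ φ : ℕ → ℕ, StrictMono φ ∧ ∀ᵐ x ∂μ, Tendsto (fun n => f (φ n) x) atTop (nhds 0) := by
  obtain ⟨φ, hφ, hd⟩ := extraction_forall_of_eventually
    (P := fun n k => dL0 μ (f k) 0 < (1 / 2) ^ n) (fun n => h.eventually_lt_const (by positivity))
  refine ⟨φ, hφ, ?_⟩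
  have hs : Summable fun k => dL0 μ (f (φ k)) 0 :=
    Summable.of_nonneg_of_le (fun k => dL0_nonneg μ _) (fun k => (hd k).le)
      summable_geometric_two
  filter_upwards [ae_summable_of_summable_dL0 μ hs] with x hx
  exact (tendsto_zero_iff_abs_tendsto_zero _).2 hx.tendsto_atTop_zero

theorem tendsto_dL0_mul (μ : Measure X) [SFinite μ] (g : L0 μ) {f : ℕ → L0 μ}
    (h : Tendsto (fun n => dL0 μ (f n) 0) atTop (nhds 0)) :
    Tendsto (fun n => dL0 μ (g * f n) 0) atTop (nhds 0) := by
  refine tendsto_of_subseq_tendsto fun ns hns => ?_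
  obtain ⟨φ, -, hae⟩ := exists_subseq_ae μ (h.comp hns)
  refine ⟨φ, tendsto_dL0_of_ae μ (f := fun n => g * f (ns (φ n))) ?_⟩
  filter_upwards [hae, ae_all_iff.2 fun n => AEEqFun.coeFn_mul g (f (ns (φ n)))] with x h1 h2
  simp only [h2, Pi.mul_apply]
  simpa using h1.const_mul (g x)

/-- Inequalities in `L⁰` are stable under errors vanishing in the distance of `L⁰`. -/
theorem le_of_le_add_tendsto (μ : Measure X) [SFinite μ] {u h : L0 μ} {f : ℕ → L0 μ}
    (hf : Tendsto (fun n => dL0 μ (f n) 0) atTop (nhds 0)) (hle : ∀ n, u ≤ h + f n) : u ≤ h := by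
  obtain ⟨φ, -, hae⟩ := exists_subseq_ae μ hf
  rw [← AEEqFun.coeFn_le]
  filter_upwards [hae, ae_all_iff.2 fun n => AEEqFun.coeFn_le.2 (hle (φ n)),
    ae_all_iff.2 fun n => AEEqFun.coeFn_add h (f (φ n))] with x h1 h2 h3
  have : Tendsto (fun n => h x + f (φ n) x) atTop (nhds (h x)) := by
    simpa using h1.const_add (h x)
  refine ge_of_tendsto' this fun n => ?_
  have := h2 n
  rwa [h3 n] at this

theorem tendsto_dL0_add (μ : Measure X) [SFinite μ] {f g : ℕ → L0 μ}
    (hf : Tendsto (fun n => dL0 μ (f n) 0) atTop (nhds 0))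
    (hg : Tendsto (fun n => dL0 μ (g n) 0) atTop (nhds 0)) :
    Tendsto (fun n => dL0 μ (f n + g n) 0) atTop (nhds 0) := by
  refine squeeze_zero (fun n => dL0_nonneg μ _) (fun n => dL0_add_le μ _ _) ?_
  simpa using hf.add hg

/-! ### `L⁰` as a Banach module over itself -/

theorem L0_complete (μ : Measure X) [SFinite μ] (u : ℕ → L0 μ)
    (hu : ∀ ε : ℝ, 0 < ε → ∃ N : ℕ, ∀ m ≥ N, ∀ n ≥ N, dL0 μ |u m - u n| 0 < ε) :
    ∃ v : L0 μ, Tendsto (fun n => dL0 μ |u n - v| 0) atTop (nhds 0) := by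
  -- a subsequence with increments of size at most `2⁻ᵏ` in the distance converges a.e.
  obtain ⟨φ, hφ, hd⟩ := extraction_forall_of_eventually
    (P := fun k N => ∀ m ≥ N, ∀ n ≥ N, dL0 μ |u m - u n| 0 < (1 / 2) ^ k) fun k => by
      obtain ⟨N, hN⟩ := hu ((1 / 2) ^ k) (by positivity)
      filter_upwards [eventually_ge_atTop N] with i hi m hm n hn
      exact hN m (hi.trans hm) n (hi.trans hn)
  have hs : Summable fun k => dL0 μ (u (φ k) - u (φ (k + 1))) 0 := by
    refine Summable.of_nonneg_of_le (fun k => dL0_nonneg μ _) (fun k => ?_)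
      summable_geometric_two
    rw [← dL0_abs]
    exact (hd k _ le_rfl _ (hφ.monotone k.le_succ)).le
  have hlim : ∀ᵐ x ∂μ, ∃ l : ℝ, Tendsto (fun k => u (φ k) x) atTop (nhds l) := by
    filter_upwards [ae_summable_of_summable_dL0 μ hs,
      ae_all_iff.2 fun k => AEEqFun.coeFn_sub (u (φ k)) (u (φ (k + 1)))] with x hx h1
    refine cauchySeq_tendsto_of_complete (cauchySeq_of_summable_dist (hx.congr fun k => ?_))
    rw [h1 k, Real.dist_eq, Pi.sub_apply]
  obtain ⟨l, hl, hlx⟩ := measurable_limit_of_tendsto_metrizable_ae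
    (fun k => (u (φ k)).aemeasurable) hlim
  set v : L0 μ := AEEqFun.mk l hl.aestronglyMeasurable
  have hsub : Tendsto (fun k => dL0 μ (u (φ k) - v) 0) atTop (nhds 0) := by
    refine tendsto_dL0_of_ae μ ?_
    filter_upwards [hlx, show v =ᵐ[μ] l from AEEqFun.coeFn_mk l _,
      ae_all_iff.2 fun k => AEEqFun.coeFn_sub (u (φ k)) v] with x h1 h2 h3
    simp only [h3, Pi.sub_apply, h2]
    simpa using h1.sub_const (l x)
  refine ⟨v, ?_⟩
  simp_rw [dL0_abs] at hu ⊢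
  rw [Metric.tendsto_atTop] at hsub ⊢
  intro ε hε
  obtain ⟨N, hN⟩ := hu (ε / 2) (by positivity)
  obtain ⟨K, hK⟩ := hsub (ε / 2) (by positivity)
  refine ⟨N, fun n hn => ?_⟩
  have h1 := hN n hn (φ (max N K)) ((le_max_left N K).trans hφ.le_apply)
  have h2 := hK (max N K) (le_max_right _ _)
  have h3 := dL0_add_le μ (u n - u (φ (max N K))) (u (φ (max N K)) - v)
  rw [sub_add_sub_cancel] at h3
  rw [Real.dist_0_eq_abs, abs_of_nonneg (dL0_nonneg μ _)] at h2 ⊢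
  linarith

/-- `L⁰(𝕏)` with pointwise norm `|·|` as a Banach module over itself. -/
instance instBanachModL0 (μ : Measure X) [SFinite μ] : BanachMod μ (L0 μ) where
  pn v := |v|
  pn_nonneg v := abs_nonneg v
  pn_eq_zero v := by
    refine ⟨fun h => le_antisymm ((le_abs_self v).trans h.le) ?_, fun h => by simp [h]⟩
    exact neg_nonpos.1 ((neg_le_abs v).trans h.le)
  pn_add_le v w := abs_add_le v w
  pn_smul f v := abs_mul_L0 μ f v
  complete u hu := L0_complete μ u hu

/-! ### Pointwise norms -/

section Modules

variable (μ : Measure X) [SFinite μ]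
variable {M : Type*} [AddCommGroup M] [Module (L0 μ) M] [BanachMod μ M]
variable {N : Type*} [AddCommGroup N] [Module (L0 μ) N] [BanachMod μ N]
variable {Q : Type*} [AddCommGroup Q] [Module (L0 μ) Q] [BanachMod μ Q]
variable {P : Type*} [AddCommGroup P] [Module (L0 μ) P] [BanachMod μ P]

theorem pn_nonneg (v : M) : 0 ≤ pn μ v := BanachMod.pn_nonneg v

theorem pn_add_le (v w : M) : pn μ (v + w) ≤ pn μ v + pn μ w := BanachMod.pn_add_le v w

theorem pn_smul (f : L0 μ) (v : M) : pn μ (f • v) = |f| * pn μ v := BanachMod.pn_smul f v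

theorem pn_zero : pn μ (0 : M) = 0 := (BanachMod.pn_eq_zero 0).2 rfl

theorem pn_neg (v : M) : pn μ (-v) = pn μ v := by
  have h := pn_smul μ (-1 : L0 μ) v
  have h1 : |(1 : L0 μ)| = 1 := abs_of_nonneg zero_le_one
  rwa [neg_one_smul, abs_neg, h1, one_mul] at h

theorem pn_sub_comm (v w : M) : pn μ (v - w) = pn μ (w - v) := by
  rw [← pn_neg, neg_sub]

theorem pn_sub_le (u v w : M) : pn μ (u - w) ≤ pn μ (u - v) + pn μ (v - w) := by
  have := pn_add_le μ (u - v) (v - w)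
  rwa [sub_add_sub_cancel] at this

theorem pn_sum_le {ι : Type*} (s : Finset ι) (v : ι → M) :
    pn μ (∑ i ∈ s, v i) ≤ ∑ i ∈ s, pn μ (v i) :=
  Finset.le_sum_of_subadditive (pn μ) (pn_zero μ).le (pn_add_le μ) s v

theorem eq_of_pn_sub_le {u v : M} {f : ℕ → L0 μ}
    (hf : Tendsto (fun n => dL0 μ (f n) 0) atTop (nhds 0)) (h : ∀ n, pn μ (u - v) ≤ f n) :
    u = v := by
  have h0 : pn μ (u - v) ≤ 0 := le_of_le_add_tendsto μ hf fun n => by simpa using h n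
  exact sub_eq_zero.1 ((BanachMod.pn_eq_zero _).1 (le_antisymm h0 (pn_nonneg μ _)))

/-! ### Extension from the algebraic tensor product by density -/

theorem IsPiTensor.exists_seq {e : M ⊗[L0 μ] N →ₗ[L0 μ] P} (hP : IsPiTensor μ M N P e) (p : P) :
    ∃ α : ℕ → M ⊗[L0 μ] N, Tendsto (fun n => dL0 μ (pn μ (e (α n) - p)) 0) atTop (nhds 0) := by
  choose α hα using fun n : ℕ => hP.dense p (1 / ((n : ℝ) + 1)) (by positivity)
  exact ⟨α, squeeze_zero (fun n => dL0_nonneg μ _) (fun n => (hα n).le)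
    tendsto_one_div_add_atTop_nhds_zero_nat⟩

theorem piReps_nonempty (α : M ⊗[L0 μ] N) : (piReps μ α).Nonempty := by
  obtain ⟨n, v, w, h⟩ : ∃ (n : ℕ) (v : Fin n → M) (w : Fin n → N),
      α = ∑ i, v i ⊗ₜ[L0 μ] w i := by
    induction α using TensorProduct.induction_on with
    | zero => exact ⟨0, Fin.elim0, Fin.elim0, by simp⟩
    | tmul x y => exact ⟨1, fun _ => x, fun _ => y, by simp⟩
    | add a b ha hb =>
      obtain ⟨n, v, w, rfl⟩ := ha
      obtain ⟨m, v', w', rfl⟩ := hb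
      exact ⟨n + m, Fin.append v v', Fin.append w w', by simp [Fin.sum_univ_add]⟩
  exact ⟨_, n, v, w, h, rfl⟩

/-- A bound for a bilinear map bounds its linearisation with respect to the projective norm. -/
theorem pn_lift_le {e : M ⊗[L0 μ] N →ₗ[L0 μ] P} (hP : IsPiTensor μ M N P e)
    {b : M →ₗ[L0 μ] N →ₗ[L0 μ] Q} {g : L0 μ} (hg : g ∈ bilinBddSet μ b) (α : M ⊗[L0 μ] N) :
    pn μ (TensorProduct.lift b α) ≤ g * pn μ (e α) := by
  refine le_mul_of_isGLB μ (piReps_nonempty μ α) (hP.pn_emb α) hg.1 ?_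
  rintro s ⟨n, v, w, rfl, rfl⟩
  rw [map_sum, Finset.mul_sum]
  refine (pn_sum_le μ _ _).trans (Finset.sum_le_sum fun i _ => ?_)
  rw [TensorProduct.lift.tmul, ← mul_assoc]
  exact hg.2 _ _

theorem pn_tmul_le {e : M ⊗[L0 μ] N →ₗ[L0 μ] P} (hP : IsPiTensor μ M N P e) (v : M) (w : N) :
    pn μ (e (v ⊗ₜ[L0 μ] w)) ≤ pn μ v * pn μ w :=
  (hP.pn_emb _).1 ⟨1, fun _ => v, fun _ => w, by simp, by simp⟩

/-- The value of the extension at `p`: the limit of `T αₙ` along any `e αₙ → p`. The estimate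
holds for all `α` at once, which makes the value independent of the sequence. -/
theorem exists_ext_value {e : M ⊗[L0 μ] N →ₗ[L0 μ] P} (hP : IsPiTensor μ M N P e)
    {T : M ⊗[L0 μ] N →ₗ[L0 μ] Q} {g : L0 μ} (hg : 0 ≤ g)
    (hT : ∀ α, pn μ (T α) ≤ g * pn μ (e α)) (p : P) :
    ∃ q : Q, ∀ α, pn μ (T α - q) ≤ g * pn μ (e α - p) := by
  have hT' : ∀ α β, pn μ (T α - T β) ≤ g * pn μ (e α - p) + g * pn μ (e β - p) := by
    intro α β
    rw [← map_sub, ← mul_add]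
    refine (hT _).trans (mul_le_mul_of_nonneg_left ?_ hg)
    rw [map_sub, pn_sub_comm μ (e β)]
    exact pn_sub_le μ _ _ _
  obtain ⟨α, hα⟩ := hP.exists_seq μ p
  have hgα := tendsto_dL0_mul μ g hα
  obtain ⟨q, hq⟩ := BanachMod.complete (μ := μ) (fun n => T (α n)) fun ε hε => by
    obtain ⟨K, hK⟩ := eventually_atTop.1 (hgα.eventually_lt_const (half_pos hε))
    refine ⟨K, fun m hm n hn => ?_⟩
    have h1 := (dL0_mono μ (pn_nonneg μ _) (hT' (α m) (α n))).trans (dL0_add_le μ _ _)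
    have h2 := hK m hm
    have h3 := hK n hn
    exact h1.trans_lt (by linarith)
  refine ⟨q, fun β => le_of_le_add_tendsto μ (tendsto_dL0_add μ hgα hq) fun n => ?_⟩
  refine (pn_sub_le μ (T β) (T (α n)) q).trans ?_
  rw [← add_assoc]
  exact add_le_add_left (hT' β (α n)) _

/-- A linear map on the algebraic tensor product that is bounded for the projective norm extends
to the completion. -/
theorem exists_ext {e : M ⊗[L0 μ] N →ₗ[L0 μ] P} (hP : IsPiTensor μ M N P e)
    {T : M ⊗[L0 μ] N →ₗ[L0 μ] Q} {g : L0 μ} (hg : 0 ≤ g)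
    (hT : ∀ α, pn μ (T α) ≤ g * pn μ (e α)) :
    ∃ B : P →ₗ[L0 μ] Q, (∀ p, pn μ (B p) ≤ g * pn μ p) ∧ ∀ α, B (e α) = T α := by
  choose F hF using exists_ext_value μ hP hg hT
  refine ⟨{ toFun := F, map_add' := fun p p' => ?_, map_smul' := fun c p => ?_ },
    fun p => ?_, fun α => ?_⟩
  · obtain ⟨α, hα⟩ := hP.exists_seq μ p
    obtain ⟨β, hβ⟩ := hP.exists_seq μ p'
    have hs := tendsto_dL0_add μ (tendsto_dL0_mul μ g hα) (tendsto_dL0_mul μ g hβ)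
    refine eq_of_pn_sub_le μ (tendsto_dL0_add μ hs hs) fun n => ?_
    refine (pn_sub_le μ _ (T (α n + β n)) _).trans (add_le_add ?_ ?_)
    · rw [pn_sub_comm, ← mul_add]
      refine (hF _ _).trans (mul_le_mul_of_nonneg_left ?_ hg)
      rw [map_add, add_sub_add_comm]
      exact pn_add_le μ _ _
    · rw [map_add, add_sub_add_comm]
      exact (pn_add_le μ _ _).trans (add_le_add (hF _ _) (hF _ _))
  · obtain ⟨α, hα⟩ := hP.exists_seq μ p
    have hs := tendsto_dL0_mul μ |c| (tendsto_dL0_mul μ g hα)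
    refine eq_of_pn_sub_le μ (tendsto_dL0_add μ hs hs) fun n => ?_
    refine (pn_sub_le μ _ (T (c • α n)) _).trans (add_le_add ?_ ?_)
    · rw [pn_sub_comm]
      refine (hF _ _).trans (le_of_eq ?_)
      rw [map_smul, ← smul_sub, pn_smul]
      ring
    · rw [map_smul, RingHom.id_apply, ← smul_sub, pn_smul]
      exact mul_le_mul_of_nonneg_left (hF _ _) (abs_nonneg c)
  · have := hF p 0
    rwa [map_zero, map_zero, zero_sub, zero_sub, pn_neg, pn_neg] at this
  · refine (eq_of_pn_sub_le μ (f := fun _ => 0) ?_ fun n => ?_).symm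
    · exact tendsto_dL0_of_ae μ (by
        filter_upwards [AEEqFun.coeFn_zero (μ := μ) (β := ℝ)] with x hx
        simp [hx])
    · have := hF (e α) α
      rwa [sub_self, pn_zero, mul_zero] at this

theorem IsHom.ext_of_tmul {e : M ⊗[L0 μ] N →ₗ[L0 μ] P} (hP : IsPiTensor μ M N P e)
    {B B' : P →ₗ[L0 μ] Q} (hB : IsHom μ B) (hB' : IsHom μ B')
    (h : ∀ (v : M) (w : N), B (e (v ⊗ₜ[L0 μ] w)) = B' (e (v ⊗ₜ[L0 μ] w))) : B = B' := by
  obtain ⟨k, hk⟩ := hB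
  obtain ⟨k', hk'⟩ := hB'
  have he : B ∘ₗ e = B' ∘ₗ e := TensorProduct.ext' h
  ext p
  obtain ⟨α, hα⟩ := hP.exists_seq μ p
  refine eq_of_pn_sub_le μ
    (tendsto_dL0_add μ (tendsto_dL0_mul μ k hα) (tendsto_dL0_mul μ k' hα)) fun n => ?_
  refine (pn_sub_le μ _ (B (e (α n))) _).trans (add_le_add ?_ ?_)
  · rw [pn_sub_comm, ← map_sub]
    exact hk.2 _
  · rw [show B (e (α n)) = B' (e (α n)) from LinearMap.congr_fun he (α n), ← map_sub]
    exact hk'.2 _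

/-! ### The universal property for a general target -/

theorem exists_hom_bound {e : M ⊗[L0 μ] N →ₗ[L0 μ] P} (hP : IsPiTensor μ M N P e)
    {b : M →ₗ[L0 μ] N →ₗ[L0 μ] Q} {g : L0 μ} (hg : g ∈ bilinBddSet μ b) :
    ∃ B : P →ₗ[L0 μ] Q, g ∈ homBddSet μ ⇑B ∧
      ∀ (v : M) (w : N), B (e (v ⊗ₜ[L0 μ] w)) = b v w := by
  obtain ⟨B, h1, h2⟩ := exists_ext μ hP hg.1 (pn_lift_le μ hP hg)
  exact ⟨B, ⟨hg.1, h1⟩, fun v w => by rw [h2, TensorProduct.lift.tmul]⟩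

theorem existsUnique_hom {e : M ⊗[L0 μ] N →ₗ[L0 μ] P} (hP : IsPiTensor μ M N P e)
    (b : M →ₗ[L0 μ] N →ₗ[L0 μ] Q) (hb : IsBddBilin μ b) :
    ∃! B : P →ₗ[L0 μ] Q, IsHom μ B ∧ ∀ (v : M) (w : N), B (e (v ⊗ₜ[L0 μ] w)) = b v w := by
  obtain ⟨g, hg⟩ := hb
  obtain ⟨B, h1, h2⟩ := exists_hom_bound μ hP hg
  refine ⟨B, ⟨⟨g, h1⟩, h2⟩, fun B' hB' => ?_⟩
  exact IsHom.ext_of_tmul μ hP hB'.1 ⟨g, h1⟩ fun v w => by rw [h2, hB'.2]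

theorem mem_bilinBddSet_of_hom {e : M ⊗[L0 μ] N →ₗ[L0 μ] P} (hP : IsPiTensor μ M N P e)
    {b : M →ₗ[L0 μ] N →ₗ[L0 μ] Q} {B : P →ₗ[L0 μ] Q}
    (h : ∀ (v : M) (w : N), B (e (v ⊗ₜ[L0 μ] w)) = b v w) {g : L0 μ} (hg : g ∈ homBddSet μ ⇑B) :
    g ∈ bilinBddSet μ b := by
  refine ⟨hg.1, fun v w => ?_⟩
  rw [← h, mul_assoc]
  exact (hg.2 _).trans (mul_le_mul_of_nonneg_left (pn_tmul_le μ hP v w) hg.1)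

theorem exists_bilin {e : M ⊗[L0 μ] N →ₗ[L0 μ] P} (hP : IsPiTensor μ M N P e)
    (B : P →ₗ[L0 μ] Q) (hB : IsHom μ B) :
    ∃ b : M →ₗ[L0 μ] N →ₗ[L0 μ] Q, IsBddBilin μ b ∧
      ∀ (v : M) (w : N), B (e (v ⊗ₜ[L0 μ] w)) = b v w := by
  obtain ⟨g, hg⟩ := hB
  have h : ∀ (v : M) (w : N), B (e (v ⊗ₜ[L0 μ] w)) =
      (TensorProduct.mk (L0 μ) M N).compr₂ (B ∘ₗ e) v w := fun v w => rfl
  exact ⟨_, ⟨g, mem_bilinBddSet_of_hom μ hP h hg⟩, h⟩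

theorem mem_bddSet_iff {e : M ⊗[L0 μ] N →ₗ[L0 μ] P} (hP : IsPiTensor μ M N P e)
    (b : M →ₗ[L0 μ] N →ₗ[L0 μ] Q) (B : P →ₗ[L0 μ] Q) (hB : IsHom μ B)
    (h : ∀ (v : M) (w : N), B (e (v ⊗ₜ[L0 μ] w)) = b v w) (g : L0 μ) :
    g ∈ bilinBddSet μ b ↔ g ∈ homBddSet μ ⇑B := by
  refine ⟨fun hg => ?_, mem_bilinBddSet_of_hom μ hP h⟩
  obtain ⟨B', h1, h2⟩ := exists_hom_bound μ hP hg
  have : B = B' := IsHom.ext_of_tmul μ hP hB ⟨g, h1⟩ fun v w => by rw [h, h2]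
  rwa [this]

end Modules

/-- universal property of the projective tensor product and the dual of
`ℳ ⊗̂_π 𝒩`. For every `b ∈ B(ℳ,𝒩;𝒬)` there is a unique `b̃_π ∈ Hom(ℳ ⊗̂_π 𝒩; 𝒬)` with
`b̃_π(v ⊗ w) = b(v,w)`; the correspondence `b ↦ b̃_π` is a bijection preserving the sets of
admissible bounds (hence the pointwise norms), i.e. an isomorphism of Banach `L⁰(𝕏)`-modules
`B(ℳ,𝒩;𝒬) ≅ Hom(ℳ ⊗̂_π 𝒩; 𝒬)`. In particular (taking `𝒬 = L⁰(𝕏)`), the dual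
`(ℳ ⊗̂_π 𝒩)*` is isomorphic to `B(ℳ,𝒩)`. Here `P` realizes `ℳ ⊗̂_π 𝒩`. -/
theorem universal_property_projective
    (μ : Measure X) [SigmaFinite μ]
    (M : Type*) [AddCommGroup M] [Module (L0 μ) M] [BanachMod μ M]
    (N : Type*) [AddCommGroup N] [Module (L0 μ) N] [BanachMod μ N]
    (Q : Type*) [AddCommGroup Q] [Module (L0 μ) Q] [BanachMod μ Q]
    (P : Type*) [AddCommGroup P] [Module (L0 μ) P] [BanachMod μ P]
    (e : M ⊗[L0 μ] N →ₗ[L0 μ] P) (hP : IsPiTensor μ M N P e) :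
    -- existence and uniqueness of the linearisation `b̃_π`
    (∀ b : M →ₗ[L0 μ] N →ₗ[L0 μ] Q, IsBddBilin μ b →
      ∃! B : P →ₗ[L0 μ] Q, IsHom μ B ∧ ∀ (v : M) (w : N), B (e (v ⊗ₜ[L0 μ] w)) = b v w)
    -- surjectivity of `b ↦ b̃_π`
    ∧ (∀ B : P →ₗ[L0 μ] Q, IsHom μ B →
        ∃ b : M →ₗ[L0 μ] N →ₗ[L0 μ] Q, IsBddBilin μ b ∧
          ∀ (v : M) (w : N), B (e (v ⊗ₜ[L0 μ] w)) = b v w)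
    -- `b ↦ b̃_π` preserves the pointwise norm: `|b̃_π| = |b|`
    ∧ (∀ (b : M →ₗ[L0 μ] N →ₗ[L0 μ] Q) (B : P →ₗ[L0 μ] Q), IsBddBilin μ b → IsHom μ B →
        (∀ (v : M) (w : N), B (e (v ⊗ₜ[L0 μ] w)) = b v w) →
        ∀ g : L0 μ, g ∈ bilinBddSet μ b ↔ g ∈ homBddSet μ ⇑B)
    -- the particular case `𝒬 = L⁰(𝕏)`: `(ℳ ⊗̂_π 𝒩)* ≅ B(ℳ,𝒩)`
    ∧ (∀ b : M →ₗ[L0 μ] N →ₗ[L0 μ] L0 μ, IsBddBilinF μ b →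
        ∃! B : P →ₗ[L0 μ] L0 μ, IsDual μ B ∧ ∀ (v : M) (w : N), B (e (v ⊗ₜ[L0 μ] w)) = b v w)
    ∧ (∀ B : P →ₗ[L0 μ] L0 μ, IsDual μ B →
        ∃ b : M →ₗ[L0 μ] N →ₗ[L0 μ] L0 μ, IsBddBilinF μ b ∧
          ∀ (v : M) (w : N), B (e (v ⊗ₜ[L0 μ] w)) = b v w)
    ∧ (∀ (b : M →ₗ[L0 μ] N →ₗ[L0 μ] L0 μ) (B : P →ₗ[L0 μ] L0 μ), IsBddBilinF μ b →
        IsDual μ B → (∀ (v : M) (w : N), B (e (v ⊗ₜ[L0 μ] w)) = b v w) →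
        ∀ g : L0 μ, g ∈ bilinBddSetF μ b ↔ g ∈ dualBddSet μ ⇑B) := by
  -- for the target `L⁰(𝕏)` the pointwise norm is `|·|`, so the last three claims are literally
  -- the first three for the Banach module `L⁰(𝕏)`
  exact ⟨existsUnique_hom μ hP, exists_bilin μ hP, fun b B _ hB h => mem_bddSet_iff μ hP b B hB h,
    existsUnique_hom (Q := L0 μ) μ hP, exists_bilin (Q := L0 μ) μ hP,
    fun b B _ hB h => mem_bddSet_iff (Q := L0 μ) μ hP b B hB h⟩

end Paper
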